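/- arXiv:1907.02306 — 4 statements merged into one kernel-verified Lean document; each statement's English description precedes it below -/
import Mathlib

section
/- Let d ≥ 1 and let P be a partition of ℝ^d all of whose elements are hyperrectangles, such that the unit cube [0,1]^d is one of the elements of P. Then P contains at least 2d + 1 elements. -/
/-!
Let `c` be the centre of the cube and consider the `2d + 1` points `c`, `c ± e_i`. Any two distinct
ones, `x` and `y`, have `c` in the smallest box containing both: in each coordinate, either one of
`x`, `y` agrees with `c`, or `{x, y} = {c + e_i, c - e_i}` and `c` is the midpoint. Hence a member
of the partition containing both `x` and `y` contains `c`, so it is the cube, which is impossible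
because one of `x`, `y` is of the form `c ± e_i` and lies outside the cube. The `2d + 1` points
therefore lie in distinct members of the partition.
-/

open Set

/-- A hyperrectangle of `ℝ^d`: a product `I_1 × ⋯ × I_d` of intervals of `ℝ`
(intervals being exactly the order-connected subsets of `ℝ`), together with the
empty set. -/
def IsHyperrectangle {d : ℕ} (s : Set (Fin d → ℝ)) : Prop :=
  s = ∅ ∨ ∃ I : Fin d → Set ℝ, (∀ i, (I i).OrdConnected) ∧ s = { x | ∀ i, x i ∈ I i }

/-- The centre of the unit cube (`none`) and its translates by the vectors `e_i`
(`some (i, true)`) and `-e_i` (`some (i, false)`). -/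
noncomputable def starPoint {d : ℕ} : Option (Fin d × Bool) → Fin d → ℝ
  | none => fun _ => 1 / 2
  | some (i, b) => Function.update (fun _ => 1 / 2) i (if b then 3 / 2 else -1 / 2)

lemma half_mem_uIcc_starPoint {d : ℕ} {s t : Option (Fin d × Bool)} (hst : s ≠ t) (k : Fin d) :
    (1 / 2 : ℝ) ∈ Set.uIcc (starPoint s k) (starPoint t k) := by
  rw [Set.mem_uIcc]
  rcases s with _ | ⟨i, b⟩ <;> rcases t with _ | ⟨j, b'⟩
  · exact absurd rfl hst
  · rcases le_total (1 / 2) (starPoint (some (j, b')) k) with h | h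
    · exact Or.inl ⟨le_rfl, h⟩
    · exact Or.inr ⟨h, le_rfl⟩
  · rcases le_total (1 / 2) (starPoint (some (i, b)) k) with h | h
    · exact Or.inr ⟨le_rfl, h⟩
    · exact Or.inl ⟨h, le_rfl⟩
  · by_cases hi : k = i <;> by_cases hj : k = j
    · subst hi; subst hj
      cases b <;> cases b' <;> simp [starPoint] at hst ⊢ <;> norm_num
    · subst hi
      cases b <;> simp [starPoint, hj] <;> norm_num
    · subst hj
      cases b' <;> simp [starPoint, hi] <;> norm_num
    · simp [starPoint, hi, hj]

lemma starPoint_some_notMem_cube {d : ℕ} (i : Fin d) (b : Bool) :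
    ¬ ∀ k, starPoint (some (i, b)) k ∈ Set.Icc (0 : ℝ) 1 := by
  intro h
  have := h i
  cases b <;> simp [starPoint] at this <;> norm_num at this

/-- any partition of `ℝ^d` (`d ≥ 1`) into hyperrectangles having the unit
cube `[0,1]^d` among its elements contains at least `2d + 1` elements. -/
theorem partition_with_cube_card_ge {d : ℕ} (hd : 1 ≤ d)
    (P : Set (Set (Fin d → ℝ)))
    (hrect : ∀ A ∈ P, IsHyperrectangle A)
    (hne : ∀ A ∈ P, A.Nonempty)
    (hdisj : ∀ A ∈ P, ∀ B ∈ P, A ≠ B → A ∩ B = ∅)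
    (hcov : ⋃₀ P = Set.univ)
    (hcube : { x : Fin d → ℝ | ∀ i, x i ∈ Set.Icc (0 : ℝ) 1 } ∈ P) :
    (2 * d + 1 : ℕ∞) ≤ P.encard := by
  have hex : ∀ s : Option (Fin d × Bool), ∃ A ∈ P, starPoint s ∈ A := fun s => by
    rw [← Set.mem_sUnion, hcov]; trivial
  choose f hfP hf using hex
  have hinj : Function.Injective f := by
    intro s t hfst
    by_contra hst
    have ht : starPoint t ∈ f s := hfst ▸ hf t
    have hc : (fun _ => 1 / 2 : Fin d → ℝ) ∈ f s := by
      rcases hrect _ (hfP s) with h0 | ⟨I, hI, hA⟩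
      · exact absurd h0 (hne _ (hfP s)).ne_empty
      · have hs := hf s
        rw [hA] at hs ht ⊢
        exact fun k => (hI k).uIcc_subset (hs k) (ht k) (half_mem_uIcc_starPoint hst k)
    have hcubeEq : f s = { x : Fin d → ℝ | ∀ i, x i ∈ Set.Icc (0 : ℝ) 1 } := by
      by_contra hn
      have hmem : (fun _ => 1 / 2 : Fin d → ℝ) ∈
          f s ∩ { x : Fin d → ℝ | ∀ i, x i ∈ Set.Icc (0 : ℝ) 1 } :=
        ⟨hc, fun _ => by norm_num⟩
      rw [hdisj _ (hfP s) _ hcube hn] at hmem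
      exact hmem
    have hs := hf s
    rw [hcubeEq] at hs ht
    rcases s with _ | ⟨i, b⟩
    · rcases t with _ | ⟨j, b'⟩
      · exact hst rfl
      · exact starPoint_some_notMem_cube j b' ht
    · exact starPoint_some_notMem_cube i b hs
  calc (2 * d + 1 : ℕ∞) = (Set.univ : Set (Option (Fin d × Bool))).encard := by
        rw [Set.encard_univ, ENat.card_eq_coe_fintype_card]
        simp [mul_comm]
    _ = (f '' Set.univ).encard := (hinj.encard_image _).symm
    _ ≤ P.encard := Set.encard_le_encard (by rintro _ ⟨s, -, rfl⟩; exact hfP s)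
end

section
/- Let Q be a probability measure on a measurable space, let δ > 0 and γ ∈ (0,1), and let r_1, …, r_k be measurable sets such that Q(r_i) > δ for every i ∈ {1, …, k} and Q(r_{i+1} ∩ (r_1 ∪ ⋯ ∪ r_i)) ≤ γ Q(r_{i+1}) for every i ∈ {1, …, k−1}. Then k < 1 / ((1 − γ) δ). (In particular, if Q(r_i) > n^{−α} for all i, then k is bounded by n^α/(1−γ).) -/
/-!
The increments `r m \ ⋃ j < m, r j` are pairwise disjoint, so their masses sum to at most `1`.
The overlap hypothesis leaves each increment at least `(1 - γ) Q(r m) > (1 - γ) δ` of mass, hence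
`k (1 - γ) δ < 1` as soon as there is at least one set; for `k = 0` the bound is trivial.
-/

open MeasureTheory

/-- if `Q` is a probability measure, `δ > 0`, `γ ∈ (0,1)`, and
`r_1, …, r_k` are measurable sets with `Q(r_i) > δ` for all `i` and
`Q(r_m ∩ (r_1 ∪ ⋯ ∪ r_{m-1})) ≤ γ Q(r_m)` for all `m`, then `k < 1/((1 − γ)δ)`. -/
theorem card_lt_of_small_overlap {Ω : Type*} [MeasurableSpace Ω]
    (Q : Measure Ω) [IsProbabilityMeasure Q]
    (δ γ : ℝ) (hδ : 0 < δ) (hγ : γ ∈ Set.Ioo (0 : ℝ) 1)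
    (k : ℕ) (r : Fin k → Set Ω) (hmeas : ∀ i, MeasurableSet (r i))
    (hlower : ∀ i, δ < (Q (r i)).toReal)
    (hoverlap : ∀ m : Fin k,
      (Q (r m ∩ ⋃ j : Fin k, ⋃ (_ : j < m), r j)).toReal ≤ γ * (Q (r m)).toReal) :
    (k : ℝ) < 1 / ((1 - γ) * δ) := by
  obtain ⟨-, hγ1⟩ := hγ
  set U : Fin k → Set Ω := fun m => ⋃ j : Fin k, ⋃ (_ : j < m), r j with hU
  have hUmeas : ∀ m, MeasurableSet (U m) := fun m =>
    MeasurableSet.iUnion fun j => MeasurableSet.iUnion fun _ => hmeas j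
  have hnew : ∀ m, (1 - γ) * δ < Q.real (r m \ U m) := by
    intro m
    have hsplit : Q.real (r m ∩ U m) + Q.real (r m \ U m) = Q.real (r m) :=
      measureReal_inter_add_sdiff (hUmeas m)
    have ho : Q.real (r m ∩ U m) ≤ γ * Q.real (r m) := hoverlap m
    have hl : δ < Q.real (r m) := hlower m
    nlinarith [mul_lt_mul_of_pos_left hl (sub_pos.2 hγ1)]
  have hlt : ∀ i j, i < j → Disjoint (r i \ U i) (r j \ U j) := by
    intro i j hij
    refine Set.disjoint_left.2 fun x hx hx' => hx'.2 ?_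
    exact Set.mem_iUnion₂.2 ⟨i, hij, hx.1⟩
  have hdisj : Pairwise (Function.onFun Disjoint fun m => r m \ U m) := by
    intro i j hij
    rcases lt_or_gt_of_ne hij with h | h
    · exact hlt i j h
    · exact (hlt j i h).symm
  have hsum : ∑ m, Q.real (r m \ U m) ≤ 1 := by
    rw [← measureReal_iUnion_fintype hdisj fun m => (hmeas m).diff (hUmeas m)]
    exact measureReal_le_one
  have hpos : 0 < (1 - γ) * δ := mul_pos (sub_pos.2 hγ1) hδ
  rw [lt_div_iff₀ hpos]
  -- Strictness comes from the sum, which is nonempty only for `k ≠ 0`.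
  rcases Nat.eq_zero_or_pos k with rfl | hk
  · simp
  · have : Nonempty (Fin k) := ⟨⟨0, hk⟩⟩
    calc (k : ℝ) * ((1 - γ) * δ) = ∑ _m : Fin k, (1 - γ) * δ := by simp
      _ < ∑ m, Q.real (r m \ U m) :=
        Finset.sum_lt_sum_of_nonempty Finset.univ_nonempty fun m _ => hnew m
      _ ≤ 1 := hsum
end

section
/- Let C be a finite collection of subsets of ℝ^d and let B ⊆ ℝ^d. Write C\B := {r \ B : r ∈ C}. Then the cells of the generated partition of C\B that are contained in the union ⋃_{r ∈ C}(r \ B) coincide, after removing the empty set, with the sets A \ B for A a cell of P(C) contained in ⋃_{r ∈ C} r; that is, {A' ∈ P(C\B) : A' ⊆ ⋃_{r∈C}(r\B)} = {A \ B : A ∈ P(C), A ⊆ ⋃_{r∈C} r} \ {∅}. -/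
/-!
A cell of a generated partition consists of the points lying in exactly the same members of the
collection as a given point `x`. If `x ∉ B` lies in some `r ∈ C`, then every `y` in the cell of `x`
for `C\B` lies in `r \ B`, hence outside `B`, and off `B` membership in `s \ B` is the same as
membership in `s`. So the cell of `x` for `C\B` is the cell of `x` for `C` with `B` removed
(`cell_diff_eq`). Both inclusions follow by choosing a representative of the cell in question
outside `B`: a cell inside `⋃ (r \ B)` only has such points, and a nonempty `A \ B` has at least one.
-/

open Set

attribute [local instance] Classical.propDecidable

/-- The activation function: `activ C x` is the set of elements of the collection `C`
containing `x`. -/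
noncomputable def activ {α : Type*} (C : Finset (Set α)) (x : α) : Finset (Set α) :=
  C.filter (fun r => x ∈ r)

/-- The partition generated from the collection `C`:
`P(C) = φ_C⁻¹(Im φ_C)`, i.e. the collection of the (nonempty) preimages
`φ_C⁻¹({S})` for `S` in the image of the activation function `φ_C`. -/
noncomputable def genPart {α : Type*} (C : Finset (Set α)) : Set (Set α) :=
  { A | ∃ x : α, A = { y | activ C y = activ C x } }

theorem activ_eq_iff {α : Type*} (C : Finset (Set α)) (x y : α) :
    activ C y = activ C x ↔ ∀ r ∈ C, (y ∈ r ↔ x ∈ r) := by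
  simp only [activ, Finset.ext_iff, Finset.mem_filter]
  exact forall_congr' fun r => by tauto

/-- The covering hypothesis on `x` ensures that its cell in `P(C\B)` misses `B`: the points lying in
no `r \ B` share one cell, and these include all points of `B`. -/
theorem cell_diff_eq {α : Type*} (C : Finset (Set α)) (B : Set α) {x : α} (hx : x ∉ B)
    {r : Set α} (hr : r ∈ C) (hxr : x ∈ r) :
    { y | activ (C.image (fun r => r \ B)) y = activ (C.image (fun r => r \ B)) x } =
      { y | activ C y = activ C x } \ B := by
  ext y
  simp only [mem_ofPred_eq, mem_sdiff, activ_eq_iff, Finset.forall_mem_image]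
  constructor
  · intro h
    have hy : y ∉ B := ((h hr).2 ⟨hxr, hx⟩).2
    exact ⟨fun s hs => by simpa [hx, hy] using h hs, hy⟩
  · rintro ⟨h, hy⟩ s hs
    simpa [hx, hy] using h s hs

/-- with `C\B := {r \ B : r ∈ C}`, the cells of `P(C\B)` contained in
`⋃_{r ∈ C} (r \ B)` coincide, after removing the empty set, with the sets `A \ B`
for `A` a cell of `P(C)` contained in `⋃_{r ∈ C} r`. -/
theorem genPart_diff_eq {d : ℕ} (C : Finset (Set (Fin d → ℝ))) (B : Set (Fin d → ℝ)) :
    { A' | A' ∈ genPart (C.image (fun r => r \ B)) ∧ A' ⊆ ⋃ r ∈ C, (r \ B) } =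
      ((fun A => A \ B) '' { A | A ∈ genPart C ∧ A ⊆ ⋃ r ∈ C, (r : Set (Fin d → ℝ)) })
        \ {∅} := by
  ext A'
  simp only [mem_ofPred_eq, mem_sdiff, mem_image, mem_singleton_iff]
  constructor
  · rintro ⟨⟨x, rfl⟩, hsub⟩
    obtain ⟨r, hr, hxr, hxB⟩ : ∃ r ∈ C, x ∈ r ∧ x ∉ B := by
      simpa only [mem_iUnion, exists_prop, mem_sdiff] using hsub (rfl : activ _ x = activ _ x)
    refine ⟨⟨{ y | activ C y = activ C x }, ⟨⟨x, rfl⟩, fun y hy => ?_⟩,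
      (cell_diff_eq C B hxB hr hxr).symm⟩, Nonempty.ne_empty ⟨x, rfl⟩⟩
    exact mem_biUnion hr (((activ_eq_iff C x y).1 hy r hr).2 hxr)
  · rintro ⟨⟨A, ⟨⟨x, rfl⟩, hsub⟩, rfl⟩, hne⟩
    obtain ⟨z, hz, hzB⟩ := nonempty_iff_ne_empty.2 hne
    obtain ⟨r, hr, hzr⟩ : ∃ r ∈ C, z ∈ r := by
      simpa only [mem_iUnion, exists_prop] using hsub hz
    -- The cell of `x` is recentred at `z`, since `x` itself may lie in `B`.
    have hzx : activ C z = activ C x := hz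
    rw [← hzx]
    refine ⟨⟨z, (cell_diff_eq C B hzB hr hzr).symm⟩, ?_⟩
    rintro y ⟨hy, hyB⟩
    exact mem_biUnion hr ⟨((activ_eq_iff C z y).1 hy r hr).2 hzr, hyB⟩
end

section
/- Let μ be a probability measure on ℝ^d, let C be a nonempty finite collection of measurable subsets of ℝ^d with maximal redundancy M(C), let h : ℝ^d → ℝ be bounded measurable, and let m₀ ∈ ℝ. Then, summing over cells and collection elements of positive measure, Σ_{A ∈ P(C), μ(A) > 0} ( E_μ[h | A] − m₀ )² μ(A) ≥ (1 / M(C)) Σ_{r ∈ C, μ(r) > 0} ( E_μ[h | r] − m₀ )² μ(r), where E_μ[h | S] := (∫_S h dμ)/μ(S). -/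
/-! Put `a(A) = ∫_A (h - m₀) dμ` and `T(A) = (E[h | A] - m₀)² μ(A)`, so that `a(A)² = μ(A) T(A)`.
Each `r ∈ C` is the disjoint union of the cells whose activation pattern contains `r`, so `a` and
`μ` are additive over these cells, and the Cauchy–Schwarz inequality gives `T(r) ≤ ∑ T(A)` over the
cells `A ⊆ r` (`groupTerm_le_sum_cell`). Summing over `r ∈ C` and exchanging the sums, the cell with
pattern `S` is counted `#S` times, and `#S ≤ M(C)` when that cell is nonempty
(`sum_collection_le`). Cells are indexed by their activation pattern `S ⊆ C`; patterns that do not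
occur give the empty cell, which contributes `0`. -/

open Set MeasureTheory

attribute [local instance] Classical.propDecidable

/-- The maximal redundancy `M(C) = max_{x ∈ ⋃ C} #φ_C(x)` of the collection `C`. -/
noncomputable def maxRedund {α : Type*} (C : Finset (Set α)) : ℕ :=
  sSup ((fun x => (activ C x).card) '' (⋃ r ∈ C, (r : Set α)))

/-- Conditional mean of `h` given the set `S`, under the measure `μ`:
`E_μ[h | S] = (∫_S h dμ)/μ(S)`. -/
noncomputable def condMeanOn {α : Type*} [MeasurableSpace α] (μ : Measure α)
    (h : α → ℝ) (S : Set α) : ℝ :=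
  (∫ x in S, h x ∂μ) / (μ S).toReal

/-- The cell of `P(C)` on which the activation function takes the value `S`; it is empty when `S`
is not in the image of the activation function. -/
def cell {α : Type*} (C S : Finset (Set α)) : Set α := { y | activ C y = S }

/-- The contribution `(E[h | A] - m₀)² μ(A)` of a set `A` to the between-group variance. It is `0`
when `μ A = 0`, so the positivity restrictions on the index sets can be dropped. -/
noncomputable def groupTerm {α : Type*} [MeasurableSpace α] (μ : Measure α) (h : α → ℝ) (m₀ : ℝ)
    (A : Set α) : ℝ :=
  (condMeanOn μ h A - m₀) ^ 2 * (μ A).toReal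

section

variable {α : Type*} {C S : Finset (Set α)}

lemma activ_subset (C : Finset (Set α)) (x : α) : activ C x ⊆ C := Finset.filter_subset _ _

lemma mem_activ {r : Set α} {x : α} : r ∈ activ C x ↔ r ∈ C ∧ x ∈ r := Finset.mem_filter

lemma cell_disjoint {S T : Finset (Set α)} (hST : S ≠ T) : Disjoint (cell C S) (cell C T) :=
  Set.disjoint_left.2 fun _ hS hT => hST (hS.symm.trans hT)

lemma biUnion_cell {r : Set α} (hr : r ∈ C) :
    ⋃ S ∈ C.powerset.filter (fun S => r ∈ S), cell C S = r := by
  ext x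
  simp only [Finset.mem_filter, Finset.mem_powerset, mem_iUnion, exists_prop, cell, mem_ofPred_eq]
  constructor
  · rintro ⟨S, ⟨-, hrS⟩, rfl⟩
    exact (mem_activ.1 hrS).2
  · exact fun hx => ⟨_, ⟨activ_subset C x, mem_activ.2 ⟨hr, hx⟩⟩, rfl⟩

lemma card_le_maxRedund (hS : (cell C S).Nonempty) : S.card ≤ maxRedund C := by
  obtain ⟨x, rfl⟩ := hS
  rcases (activ C x).eq_empty_or_nonempty with h0 | ⟨r, hr⟩
  · simp [h0]
  · refine le_csSup ⟨C.card, ?_⟩ ⟨x, ?_, rfl⟩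
    · rintro _ ⟨y, -, rfl⟩
      exact Finset.card_le_card (activ_subset C y)
    · simp only [mem_iUnion, exists_prop]
      exact ⟨r, mem_activ.1 hr⟩

variable [MeasurableSpace α]

lemma measurableSet_cell (hC : ∀ r ∈ C, MeasurableSet r) (hS : S ⊆ C) :
    MeasurableSet (cell C S) := by
  have : cell C S = ⋂ r ∈ C, { x | x ∈ r ↔ r ∈ S } := by
    ext x
    simp only [cell, mem_ofPred_eq, mem_iInter, Finset.ext_iff, mem_activ]
    exact ⟨fun hx r hr => by simpa [hr] using hx r,
      fun hx r => ⟨fun hr => (hx r hr.1).1 hr.2, fun hr => ⟨hS hr, (hx r (hS hr)).2 hr⟩⟩⟩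
  rw [this]
  refine Finset.measurableSet_biInter _ fun r hr => ?_
  by_cases hrS : r ∈ S
  · simpa [hrS] using hC r hr
  · rw [show { x | x ∈ r ↔ r ∈ S } = rᶜ by ext; simp [hrS]]
    exact (hC r hr).compl

variable {μ : Measure α} {h : α → ℝ} {m₀ : ℝ}

lemma groupTerm_nonneg (A : Set α) : 0 ≤ groupTerm μ h m₀ A := by
  unfold groupTerm; positivity

lemma groupTerm_of_not_pos {A : Set α} (hA : ¬ 0 < μ A) : groupTerm μ h m₀ A = 0 := by
  simp [groupTerm, nonpos_iff_eq_zero.1 (not_lt.1 hA)]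

/-- The restriction `μ r > 0` does not affect the sum over the collection. -/
lemma finsum_collection :
    ∑ᶠ r ∈ { r | r ∈ C ∧ 0 < μ r }, groupTerm μ h m₀ r = ∑ r ∈ C, groupTerm μ h m₀ r := by
  rw [show { r | r ∈ C ∧ 0 < μ r } = ↑(C.filter fun r => 0 < μ r) by ext; simp,
    finsum_mem_coe_finset]
  exact Finset.sum_filter_of_ne fun r _ hr => by_contra fun h0 => hr (groupTerm_of_not_pos h0)

/-- The sum over the cells of `P(C)` of positive measure, reindexed by the activation pattern. -/
lemma finsum_genPart :
    ∑ᶠ A ∈ { A | A ∈ genPart C ∧ 0 < μ A }, groupTerm μ h m₀ A =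
      ∑ S ∈ C.powerset, groupTerm μ h m₀ (cell C S) := by
  have himg : { A | A ∈ genPart C ∧ 0 < μ A } =
      cell C '' ↑(C.powerset.filter fun S => 0 < μ (cell C S)) := by
    ext A
    simp only [mem_ofPred_eq, mem_image, Finset.mem_coe, Finset.mem_filter, Finset.mem_powerset]
    constructor
    · rintro ⟨⟨x, rfl⟩, hA⟩
      exact ⟨activ C x, ⟨activ_subset C x, hA⟩, rfl⟩
    · rintro ⟨S, ⟨-, hpos⟩, rfl⟩
      obtain ⟨x, rfl⟩ := nonempty_of_measure_ne_zero hpos.ne'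
      exact ⟨⟨x, rfl⟩, hpos⟩
  have hinj : InjOn (cell C) ↑(C.powerset.filter fun S => 0 < μ (cell C S)) := by
    intro S hS T _ hST
    obtain ⟨x, hx⟩ := nonempty_of_measure_ne_zero (Finset.mem_filter.1 hS).2.ne'
    have hx' : x ∈ cell C T := hST ▸ hx
    exact hx.symm.trans hx'
  rw [himg, finsum_mem_image hinj, finsum_mem_coe_finset]
  exact Finset.sum_filter_of_ne fun S _ hS => by_contra fun h0 => hS (groupTerm_of_not_pos h0)

variable [IsFiniteMeasure μ]

lemma sq_setIntegral_sub (hint : Integrable h μ) (A : Set α) :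
    (∫ x in A, (h x - m₀) ∂μ) ^ 2 = (μ A).toReal * groupTerm μ h m₀ A := by
  rcases eq_or_ne (μ A) 0 with h0 | h0
  · simp [h0, Measure.restrict_eq_zero.2 h0]
  · have hne : (μ A).toReal ≠ 0 := ENNReal.toReal_ne_zero.2 ⟨h0, measure_ne_top μ A⟩
    rw [integral_sub hint.integrableOn (integrable_const _), setIntegral_const, groupTerm,
      condMeanOn, Measure.real, smul_eq_mul]
    field_simp

/-- Jensen's inequality for the square, over the cells contained in `r`. It takes the form of the
Cauchy–Schwarz inequality for `∫_A (h - m₀)`, whose square is `μ(A)` times the term of `A`; this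
also covers cells of measure zero. -/
lemma groupTerm_le_sum_cell (hC : ∀ r ∈ C, MeasurableSet r) (hint : Integrable h μ)
    {r : Set α} (hr : r ∈ C) :
    groupTerm μ h m₀ r ≤
      ∑ S ∈ C.powerset.filter (fun S => r ∈ S), groupTerm μ h m₀ (cell C S) := by
  by_cases hpos : 0 < μ r
  swap
  · rw [groupTerm_of_not_pos hpos]
    exact Finset.sum_nonneg fun _ _ => groupTerm_nonneg _
  set F := C.powerset.filter (fun S => r ∈ S) with hF
  have hmeas : ∀ S ∈ F, MeasurableSet (cell C S) := fun S hS =>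
    measurableSet_cell hC (Finset.mem_powerset.1 (Finset.mem_filter.1 hS).1)
  have hdisj : (F : Set (Finset (Set α))).PairwiseDisjoint (cell C) :=
    fun _ _ _ _ hST => cell_disjoint hST
  have hμ : (μ r).toReal = ∑ S ∈ F, (μ (cell C S)).toReal := by
    rw [← ENNReal.toReal_sum fun _ _ => measure_ne_top μ _,
      ← measure_biUnion_finset hdisj hmeas, hF, biUnion_cell hr]
  have hI : ∫ x in r, (h x - m₀) ∂μ = ∑ S ∈ F, ∫ x in cell C S, (h x - m₀) ∂μ := by
    have hsub : Integrable (fun x => h x - m₀) μ := hint.sub (integrable_const m₀)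
    rw [← integral_biUnion_finset F hmeas hdisj fun _ _ => hsub.integrableOn, hF,
      biUnion_cell hr]
  have hr0 : 0 < (μ r).toReal := ENNReal.toReal_pos hpos.ne' (measure_ne_top μ r)
  refine le_of_mul_le_mul_left ?_ hr0
  rw [← sq_setIntegral_sub hint, hI, hμ]
  exact Finset.sum_sq_le_sum_mul_sum_of_sq_le_mul F (fun _ _ => ENNReal.toReal_nonneg)
    (fun _ _ => groupTerm_nonneg _) fun _ _ => (sq_setIntegral_sub hint _).le

lemma sum_collection_le (hC : ∀ r ∈ C, MeasurableSet r) (hint : Integrable h μ) :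
    ∑ r ∈ C, groupTerm μ h m₀ r ≤
      maxRedund C * ∑ S ∈ C.powerset, groupTerm μ h m₀ (cell C S) := by
  calc ∑ r ∈ C, groupTerm μ h m₀ r
      ≤ ∑ r ∈ C, ∑ S ∈ C.powerset.filter (fun S => r ∈ S), groupTerm μ h m₀ (cell C S) :=
        Finset.sum_le_sum fun r hr => groupTerm_le_sum_cell hC hint hr
    _ = ∑ S ∈ C.powerset, ∑ r ∈ S, groupTerm μ h m₀ (cell C S) := by
        refine Finset.sum_comm' fun r S => ?_
        simp only [Finset.mem_filter, Finset.mem_powerset]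
        exact ⟨fun ⟨_, hS, hrS⟩ => ⟨hrS, hS⟩, fun ⟨hrS, hS⟩ => ⟨hS hrS, hS, hrS⟩⟩
    _ ≤ ∑ S ∈ C.powerset, maxRedund C * groupTerm μ h m₀ (cell C S) := by
        refine Finset.sum_le_sum fun S _ => ?_
        rw [Finset.sum_const, nsmul_eq_mul]
        rcases (cell C S).eq_empty_or_nonempty with h0 | hne
        · simp [h0, groupTerm]
        · exact mul_le_mul_of_nonneg_right (Nat.cast_le.2 (card_le_maxRedund hne))
            (groupTerm_nonneg _)
    _ = _ := (Finset.mul_sum _ _ _).symm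

end

/-- between-group lower bound. For a probability measure `μ`, a
nonempty finite collection `C` of measurable sets with maximal redundancy `M(C)`,
a bounded measurable `h` and `m₀ ∈ ℝ`,
`Σ_{A ∈ P(C), μ(A)>0} (E[h|A] − m₀)² μ(A) ≥ (1/M(C)) Σ_{r ∈ C, μ(r)>0} (E[h|r] − m₀)² μ(r)`. -/
theorem between_group_variance_lower_bound {d : ℕ}
    (μ : Measure (Fin d → ℝ)) [IsProbabilityMeasure μ]
    (C : Finset (Set (Fin d → ℝ))) (hC_ne : C.Nonempty)
    (hC_meas : ∀ r ∈ C, MeasurableSet r)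
    (h : (Fin d → ℝ) → ℝ) (hmeas : Measurable h)
    (K : ℝ) (hbdd : ∀ x, |h x| ≤ K) (m₀ : ℝ) :
    ∑ᶠ A ∈ { A | A ∈ genPart C ∧ 0 < μ A },
        (condMeanOn μ h A - m₀) ^ 2 * (μ A).toReal ≥
      (1 / (maxRedund C : ℝ)) *
        ∑ᶠ r ∈ { r | r ∈ C ∧ 0 < μ r },
          (condMeanOn μ h r - m₀) ^ 2 * (μ r).toReal := by
  have hint : Integrable h μ :=
    Integrable.of_bound hmeas.aestronglyMeasurable K (Filter.Eventually.of_forall hbdd)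
  have hmain := sum_collection_le (m₀ := m₀) hC_meas hint
  rw [← finsum_collection (C := C), ← finsum_genPart] at hmain
  have hnonneg : 0 ≤ ∑ᶠ A ∈ { A | A ∈ genPart C ∧ 0 < μ A }, groupTerm μ h m₀ A := by
    rw [finsum_genPart]
    exact Finset.sum_nonneg fun _ _ => groupTerm_nonneg _
  simp only [groupTerm] at hmain hnonneg
  rw [ge_iff_le, one_div_mul_eq_div]
  -- `div_le_of_le_mul₀` needs only `0 ≤ M(C)`: for `M(C) = 0` the quotient is `0`.
  exact div_le_of_le_mul₀ (Nat.cast_nonneg _) hnonneg (by rwa [mul_comm] at hmain)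
end
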